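/- arXiv:2009.14815 — 2 statements merged into one kernel-verified Lean document; each statement's English description precedes it below -/
import Mathlib

section
/- In U(sl₂)^{⊗3} with notation as above, the classical Racah relation [X, Z] = 4{X,Y} + 4X² − 4(k₁+k₂+k₃+k₄)X + 4(k₁−k₂)(k₄−k₃) holds, where Z = [X,Y], {A,B} = AB + BA, and k₄ = k₁+k₂+k₃+2(T^{(1,2)}+T^{(2,3)}+T^{(1,3)}). -/
/-- The defining relations of `U(sl₂)^{⊗3}` in terms of the matrix-unit
generators `e a i j` (the element `e_{ij}` of the `a`-th tensor factor):
tracelessness `e_{11} + e_{22} = 0` in each factor, the `sl₂` commutation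
relations `[e_{ij}, e_{kl}] = δ_{jk} e_{il} - δ_{li} e_{kj}` within each
factor, and commutativity between distinct factors. -/
def SL2Cube {A : Type*} [Ring A] (e : Fin 3 → Fin 2 → Fin 2 → A) : Prop :=
  (∀ a, e a 0 0 + e a 1 1 = 0) ∧
  (∀ (a : Fin 3) (i j k l : Fin 2),
      e a i j * e a k l - e a k l * e a i j =
        (if j = k then e a i l else 0) - (if l = i then e a k j else 0)) ∧
  (∀ (a b : Fin 3), a ≠ b → ∀ i j k l : Fin 2, Commute (e a i j) (e b k l))

/-- The polarized trace `T^{(a,b)} = Σ_{i₁,i₂} e_{i₂i₁}^{(a)} e_{i₁i₂}^{(b)}`. -/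
def T2 {A : Type*} [Ring A] (e : Fin 3 → Fin 2 → Fin 2 → A) (a b : Fin 3) : A :=
  ∑ i1 : Fin 2, ∑ i2 : Fin 2, e a i2 i1 * e b i1 i2

/-- The polarized trace `T^{(1,2,3)} = Σ e_{i₂i₁}^{(1)} e_{i₃i₂}^{(2)} e_{i₁i₃}^{(3)}`. -/
def T3 {A : Type*} [Ring A] (e : Fin 3 → Fin 2 → Fin 2 → A) : A :=
  ∑ i1 : Fin 2, ∑ i2 : Fin 2, ∑ i3 : Fin 2, e 0 i2 i1 * e 1 i3 i2 * e 2 i1 i3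

/-- `k_a = T^{(a,a)}`. -/
def kA {A : Type*} [Ring A] (e : Fin 3 → Fin 2 → Fin 2 → A) (a : Fin 3) : A :=
  T2 e a a

/-- `X = k₁ + k₂ + 2 T^{(1,2)}`. -/
def XX {A : Type*} [Ring A] (e : Fin 3 → Fin 2 → Fin 2 → A) : A :=
  kA e 0 + kA e 1 + 2 * T2 e 0 1

/-- `Y = k₂ + k₃ + 2 T^{(2,3)}`. -/
def YY {A : Type*} [Ring A] (e : Fin 3 → Fin 2 → Fin 2 → A) : A :=
  kA e 1 + kA e 2 + 2 * T2 e 1 2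

/-- `Z = [X,Y]`. -/
def ZZ {A : Type*} [Ring A] (e : Fin 3 → Fin 2 → Fin 2 → A) : A :=
  XX e * YY e - YY e * XX e

/-- `k₄ = k₁ + k₂ + k₃ + 2(T^{(1,2)} + T^{(2,3)} + T^{(1,3)})`. -/
def k4 {A : Type*} [Ring A] (e : Fin 3 → Fin 2 → Fin 2 → A) : A :=
  kA e 0 + kA e 1 + kA e 2 + 2 * (T2 e 0 1 + T2 e 1 2 + T2 e 0 2)

/-!
An `sl₂`-triple arranged as a matrix `M` with entries in `A` satisfies a noncommutative
Cayley–Hamilton identity: `M² - M` is the scalar matrix of half the Casimir element. Sums of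
entrywise commuting `sl₂`-matrices are `sl₂`-matrices (the diagonal embedding), so with
`E₁, E₂, E₃` the matrices of the three factors and `κ M = M² - M`, the elements
`kₐ, X, Y, k₄` are, as scalar matrices, twice `κ Eₐ`, `κ (E₁ + E₂)`, `κ (E₂ + E₃)` and
`κ (E₁ + E₂ + E₃)`. The Racah relation is then an identity between `P`, `Q`, `S` in an arbitrary
ring: `x = κ (P + Q)` acts on `Q` by commutator in the same way as `P + Q` does, so `⁅x, ⁅x, Q⁆⁆`
can be evaluated, and anticommuting the result with `S` gives `⁅x, ⁅x, κ (Q + S)⁆⁆`.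
-/

attribute [local instance] LieRing.ofAssociativeRing

/-- The quadratic expression `κ M = M² - M`. On a matrix of `sl₂` generators it is the scalar
matrix of half the Casimir element, which it defines without dividing by `2`. -/
def halfCasimir {R : Type*} [Ring R] (M : R) : R := M * M - M

local notation "κ" => halfCasimir

section HalfCasimir

variable {R : Type*} [Ring R]

theorem halfCasimir_add (P Q : R) : κ (P + Q) = κ P + κ Q + (P * Q + Q * P) := by
  unfold halfCasimir
  noncomm_ring

theorem mul_self_eq_add_halfCasimir (M : R) : M * M = M + κ M :=
  (add_sub_cancel M (M * M)).symm

theorem commute_halfCasimir_right {a M : R} (h : Commute a M) : Commute a (κ M) :=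
  (h.mul_right h).sub_right h

theorem commute_halfCasimir_self (M : R) : Commute (κ M) M :=
  (commute_halfCasimir_right (Commute.refl M)).symm

theorem lie_anticommutator_of_commute {x S : R} (h : Commute x S) (Q : R) :
    ⁅x, Q * S + S * Q⁆ = ⁅x, Q⁆ * S + S * ⁅x, Q⁆ := by
  have hQ : Q * (x * S) = Q * (S * x) := by rw [h.eq]
  have hS : x * (S * Q) = S * (x * Q) := h.left_comm Q
  simp only [Ring.lie_def, mul_add, add_mul, mul_sub, sub_mul, mul_assoc, hQ, hS]
  abel

section TwoElements

variable {P Q : R} (hPQ : Commute (κ P) Q) (hQP : Commute (κ Q) P)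
include hPQ hQP

theorem lie_halfCasimir_add : ⁅κ (P + Q), Q⁆ = ⁅P + Q, Q⁆ := by
  have hQQ := commute_halfCasimir_self Q
  calc ⁅κ (P + Q), Q⁆
      = ⁅P, Q * Q⁆ := by
        rw [halfCasimir_add, add_lie, add_lie, hPQ.lie_eq, hQQ.lie_eq]
        simp only [Ring.lie_def]
        noncomm_ring
    _ = ⁅P + Q, Q⁆ := by
        rw [mul_self_eq_add_halfCasimir, lie_add, hQP.symm.lie_eq, add_lie, lie_self]

theorem lie_lie_halfCasimir_add :
    ⁅κ (P + Q), ⁅κ (P + Q), Q⁆⁆ =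
      2 * (κ (P + Q) * Q + Q * κ (P + Q)) - 2 * ((κ (P + Q) - κ P + κ Q) * (P + Q)) := by
  set M := P + Q with hM
  set c := κ M - κ P + κ Q with hc
  have hlie : ⁅κ M, Q⁆ = ⁅M, Q⁆ := lie_halfCasimir_add hPQ hQP
  have hxM : Commute (κ M) M := commute_halfCasimir_self M
  have hcM : Commute c M :=
    (hxM.sub_left ((commute_halfCasimir_self P).add_right hPQ)).add_left
      (hQP.add_right (commute_halfCasimir_self Q))
  have hanti : M * Q + Q * M = c + 2 * Q := by
    rw [hc, hM, halfCasimir_add]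
    simp only [halfCasimir]
    noncomm_ring
  have hMM : M * M = M + κ M := mul_self_eq_add_halfCasimir M
  have hleft : M * Q * M = c * M + Q * M - Q * κ M := by
    rw [eq_sub_of_add_eq hanti, sub_mul, mul_assoc Q, hMM]
    noncomm_ring
  have hright : M * Q * M = c * M + M * Q - κ M * Q := by
    rw [mul_assoc, eq_sub_of_add_eq' hanti, mul_sub, ← mul_assoc M M, hMM, mul_add, ← hcM.eq]
    noncomm_ring
  calc ⁅κ M, ⁅κ M, Q⁆⁆
      = ⁅M, ⁅M, Q⁆⁆ := by rw [hlie, leibniz_lie, hxM.lie_eq, zero_lie, zero_add, hlie]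
    _ = M * M * Q + Q * (M * M) - M * Q * M - M * Q * M := by
        simp only [Ring.lie_def]
        noncomm_ring
    _ = (M + κ M) * Q + Q * (M + κ M) - (c * M + Q * M - Q * κ M)
          - (c * M + M * Q - κ M * Q) := by
        nth_rw 1 [hleft]
        rw [hright, hMM]
    _ = 2 * (κ M * Q + Q * κ M) - 2 * (c * M) := by noncomm_ring

theorem lie_lie_halfCasimir_add_anticommutator {S : R} (hPS : Commute (κ P) S)
    (hQS : Commute (κ Q) S) (hxS : Commute (κ (P + Q)) S) :
    ⁅κ (P + Q), ⁅κ (P + Q), Q * S + S * Q⁆⁆ =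
      2 * (κ (P + Q) * (Q * S + S * Q) + (Q * S + S * Q) * κ (P + Q))
        - 2 * ((κ (P + Q) - κ P + κ Q) * ((P + Q) * S + S * (P + Q))) := by
  have hxxQ := lie_lie_halfCasimir_add hPQ hQP
  have hcS : Commute (κ (P + Q) - κ P + κ Q) S := (hxS.sub_left hPS).add_left hQS
  set x := κ (P + Q)
  set c := x - κ P + κ Q
  have hx : (x * Q + Q * x) * S + S * (x * Q + Q * x)
      = x * (Q * S + S * Q) + (Q * S + S * Q) * x := by
    simp only [mul_add, add_mul, mul_assoc, hxS.eq, hxS.symm.left_comm]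
    abel
  have hc : c * (P + Q) * S + S * (c * (P + Q)) = c * ((P + Q) * S + S * (P + Q)) := by
    rw [hcS.symm.left_comm, mul_assoc, ← mul_add]
  rw [lie_anticommutator_of_commute hxS, lie_anticommutator_of_commute hxS, hxxQ, ← hx, ← hc]
  noncomm_ring

end TwoElements

theorem racah_relation_halfCasimir {P Q S : R} (hPQ : Commute (κ P) Q) (hPS : Commute (κ P) S)
    (hQP : Commute (κ Q) P) (hQS : Commute (κ Q) S) (hxS : Commute (κ (P + Q)) S) :
    ⁅κ (P + Q), ⁅κ (P + Q), κ (Q + S)⁆⁆ =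
      2 * (κ (P + Q) * κ (Q + S) + κ (Q + S) * κ (P + Q)) + 2 * κ (P + Q) ^ 2
        - 2 * ((κ P + κ Q + κ S + κ (P + Q + S)) * κ (P + Q))
        + 2 * ((κ P - κ Q) * (κ (P + Q + S) - κ S)) := by
  have hxxu := lie_lie_halfCasimir_add_anticommutator hPQ hQP hPS hQS hxS
  have hQS_anti : Q * S + S * Q = κ (Q + S) - κ Q - κ S := by
    rw [halfCasimir_add]
    abel
  have hMS_anti : (P + Q) * S + S * (P + Q) = κ (P + Q + S) - κ (P + Q) - κ S := by
    rw [halfCasimir_add (P + Q) S]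
    abel
  set x := κ (P + Q)
  set y := κ (Q + S)
  set k := κ (P + Q + S)
  have hxκQ : Commute x (κ Q) :=
    (commute_halfCasimir_right (hQP.add_right (commute_halfCasimir_self Q))).symm
  have hxκS : Commute x (κ S) := commute_halfCasimir_right hxS
  have hxk : Commute x k :=
    commute_halfCasimir_right ((commute_halfCasimir_self (P + Q)).add_right hxS)
  calc ⁅x, ⁅x, y⁆⁆
      = ⁅x, ⁅x, Q * S + S * Q⁆⁆ := by
        rw [hQS_anti, sub_sub, lie_sub, (hxκQ.add_right hxκS).lie_eq, sub_zero]
    _ = 2 * (x * (y - κ Q - κ S) + (y - κ Q - κ S) * x)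
          - 2 * ((x - κ P + κ Q) * (k - x - κ S)) := by
        rw [hxxu, hQS_anti, hMS_anti]
    _ = 2 * (x * y + y * x) + 2 * x ^ 2 - 2 * ((κ P + κ Q + κ S + k) * x)
          + 2 * ((κ P - κ Q) * (k - κ S)) := by
        simp only [mul_sub, sub_mul, add_mul, hxκQ.eq, hxκS.eq, hxk.eq]
        noncomm_ring

end HalfCasimir

section SL2Matrix

variable {A : Type*} [Ring A]

/-- Two matrices over a noncommutative ring commute entrywise if every entry of the first commutes
with every entry of the second; the matrices themselves need not commute. -/
def EntrywiseCommute {l m n o : Type*} (M : Matrix l m A) (N : Matrix n o A) : Prop :=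
  ∀ i j k l, Commute (M i j) (N k l)

namespace EntrywiseCommute

variable {l m n o : Type*} {M M' : Matrix l m A} {N : Matrix n o A}

theorem symm (h : EntrywiseCommute M N) : EntrywiseCommute N M :=
  fun i j k l => (h k l i j).symm

theorem add_left (h : EntrywiseCommute M N) (h' : EntrywiseCommute M' N) :
    EntrywiseCommute (M + M') N :=
  fun i j k l => (h i j k l).add_left (h' i j k l)

theorem sub_left (h : EntrywiseCommute M N) (h' : EntrywiseCommute M' N) :
    EntrywiseCommute (M - M') N :=
  fun i j k l => (h i j k l).sub_left (h' i j k l)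

theorem mul_left {p : Type*} [Fintype m] {M' : Matrix m p A} (h : EntrywiseCommute M N)
    (h' : EntrywiseCommute M' N) : EntrywiseCommute (M * M') N :=
  fun i j k l => Commute.sum_left _ _ _ fun r _ => (h i r k l).mul_left (h' r j k l)

theorem halfCasimir_left [Fintype m] [DecidableEq m] {M : Matrix m m A} (h : EntrywiseCommute M N) :
    EntrywiseCommute (κ M) N :=
  (h.mul_left h).sub_left h

theorem trace_mul_comm [Fintype m] [Fintype n] {M : Matrix m n A} {N : Matrix n m A}
    (h : EntrywiseCommute M N) : (M * N).trace = (N * M).trace := by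
  simp only [Matrix.trace, Matrix.diag_apply, Matrix.mul_apply]
  rw [Finset.sum_comm]
  exact Finset.sum_congr rfl fun i _ => Finset.sum_congr rfl fun j _ => (h j i i j).eq

theorem trace_add_mul_add [Fintype m] {M N : Matrix m m A} (h : EntrywiseCommute M N) :
    ((M + N) * (M + N)).trace = (M * M).trace + (N * N).trace + 2 * (M * N).trace := by
  simp only [mul_add, add_mul, Matrix.trace_add, ← h.trace_mul_comm]
  noncomm_ring

end EntrywiseCommute

/-- A `2 × 2` matrix whose entries satisfy the relations of the matrix units `e_{ij}` in `sl₂`,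
that is, the matrix of a Lie homomorphism from `sl₂` to the ring of coefficients. -/
structure IsSL2Matrix (M : Matrix (Fin 2) (Fin 2) A) : Prop where
  trace_eq_zero : M.trace = 0
  lie_apply (i j k l : Fin 2) :
    ⁅M i j, M k l⁆ = (if j = k then M i l else 0) - (if l = i then M k j else 0)

namespace IsSL2Matrix

variable {M N : Matrix (Fin 2) (Fin 2) A}

theorem add (hM : IsSL2Matrix M) (hN : IsSL2Matrix N) (h : EntrywiseCommute M N) :
    IsSL2Matrix (M + N) where
  trace_eq_zero := by rw [Matrix.trace_add, hM.trace_eq_zero, hN.trace_eq_zero, add_zero]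
  lie_apply i j k l := by
    simp only [Matrix.add_apply, add_lie, lie_add, (h i j k l).lie_eq, (h.symm i j k l).lie_eq,
      hM.lie_apply, hN.lie_apply]
    split_ifs <;> abel

theorem halfCasimir_eq_scalar (hM : IsSL2Matrix M) : κ M = Matrix.scalar (Fin 2) (κ M 0 0) := by
  have htr : M 1 1 = -M 0 0 := by
    rw [eq_neg_iff_add_eq_zero, add_comm, ← Matrix.trace_fin_two, hM.trace_eq_zero]
  have h01 : M 0 0 * M 0 1 - M 0 1 * M 0 0 = M 0 1 := by
    simpa [Ring.lie_def] using hM.lie_apply 0 0 0 1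
  have h10 : M 1 0 * M 0 0 - M 0 0 * M 1 0 = M 1 0 := by
    simpa [Ring.lie_def] using hM.lie_apply 1 0 0 0
  have hdiag : M 1 0 * M 0 1 - M 0 1 * M 1 0 = M 1 1 - M 0 0 := by
    simpa [Ring.lie_def] using hM.lie_apply 1 0 0 1
  ext i j
  fin_cases i <;> fin_cases j
  · simp
  · simp [halfCasimir, Matrix.mul_apply, htr, h01, ← sub_eq_add_neg]
  · simp [halfCasimir, Matrix.mul_apply, htr, h10, ← sub_eq_add_neg]
  · suffices M 1 0 * M 0 1 + M 1 1 * M 1 1 - M 1 1 = M 0 0 * M 0 0 + M 0 1 * M 1 0 - M 0 0 by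
      simpa [halfCasimir, Matrix.mul_apply]
    rw [sub_eq_iff_eq_add.mp hdiag, htr]
    noncomm_ring

theorem commute_halfCasimir (hM : IsSL2Matrix M) (h : EntrywiseCommute M N) :
    Commute (κ M) N := by
  rw [hM.halfCasimir_eq_scalar, Matrix.scalar_commute_iff]
  ext i j
  exact (h.halfCasimir_left 0 0 i j).eq

theorem scalar_trace_mul_self (hM : IsSL2Matrix M) :
    Matrix.scalar (Fin 2) (M * M).trace = 2 * κ M := by
  have htrace : (M * M).trace = (κ M).trace := by
    rw [mul_self_eq_add_halfCasimir, Matrix.trace_add, hM.trace_eq_zero, zero_add]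
  have h00 : (κ M).trace = 2 * κ M 0 0 := by
    rw [hM.halfCasimir_eq_scalar]
    simp [two_mul]
  rw [htrace, h00, map_mul, map_ofNat, ← hM.halfCasimir_eq_scalar]

end IsSL2Matrix

end SL2Matrix

section SL2Cube

variable {A : Type*} [Ring A]

theorem T2_eq_trace (e : Fin 3 → Fin 2 → Fin 2 → A) (a b : Fin 3) :
    T2 e a b = (Matrix.of (e a) * Matrix.of (e b)).trace := by
  simp only [T2, Matrix.trace, Matrix.diag_apply, Matrix.mul_apply, Matrix.of_apply]
  exact Finset.sum_comm

namespace SL2Cube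

variable {e : Fin 3 → Fin 2 → Fin 2 → A}

theorem isSL2Matrix (h : SL2Cube e) (a : Fin 3) : IsSL2Matrix (Matrix.of (e a)) where
  trace_eq_zero := (Matrix.trace_fin_two _).trans (h.1 a)
  lie_apply := h.2.1 a

theorem entrywiseCommute (h : SL2Cube e) {a b : Fin 3} (hab : a ≠ b) :
    EntrywiseCommute (Matrix.of (e a)) (Matrix.of (e b)) :=
  h.2.2 a b hab

theorem isSL2Matrix_add (h : SL2Cube e) {a b : Fin 3} (hab : a ≠ b) :
    IsSL2Matrix (Matrix.of (e a) + Matrix.of (e b)) :=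
  (h.isSL2Matrix a).add (h.isSL2Matrix b) (h.entrywiseCommute hab)

theorem entrywiseCommute_add_left (h : SL2Cube e) {a b c : Fin 3} (hac : a ≠ c) (hbc : b ≠ c) :
    EntrywiseCommute (Matrix.of (e a) + Matrix.of (e b)) (Matrix.of (e c)) :=
  (h.entrywiseCommute hac).add_left (h.entrywiseCommute hbc)

theorem scalar_kA (h : SL2Cube e) (a : Fin 3) :
    Matrix.scalar (Fin 2) (kA e a) = 2 * κ (Matrix.of (e a)) := by
  rw [kA, T2_eq_trace, (h.isSL2Matrix a).scalar_trace_mul_self]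

theorem scalar_kA_add_kA_add_two_mul_T2 (h : SL2Cube e) {a b : Fin 3} (hab : a ≠ b) :
    Matrix.scalar (Fin 2) (kA e a + kA e b + 2 * T2 e a b) =
      2 * κ (Matrix.of (e a) + Matrix.of (e b)) := by
  rw [← (h.isSL2Matrix_add hab).scalar_trace_mul_self, (h.entrywiseCommute hab).trace_add_mul_add]
  simp only [kA, T2_eq_trace]

theorem scalar_k4 (h : SL2Cube e) :
    Matrix.scalar (Fin 2) (k4 e) =
      2 * κ (Matrix.of (e 0) + Matrix.of (e 1) + Matrix.of (e 2)) := by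
  have h01 : (0 : Fin 3) ≠ 1 := by decide
  have hcomm := h.entrywiseCommute_add_left (a := 0) (b := 1) (c := 2) (by decide) (by decide)
  have hsl2 := (h.isSL2Matrix_add h01).add (h.isSL2Matrix 2) hcomm
  rw [← hsl2.scalar_trace_mul_self, hcomm.trace_add_mul_add,
    (h.entrywiseCommute h01).trace_add_mul_add, add_mul, Matrix.trace_add]
  simp only [k4, kA, T2_eq_trace]
  congr 1
  noncomm_ring

end SL2Cube

end SL2Cube

/-- The classical Racah relation in `U(sl₂)^{⊗3}`:
`[X,Z] = 4{X,Y} + 4X² − 4(k₁+k₂+k₃+k₄)X + 4(k₁−k₂)(k₄−k₃)`. -/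
theorem racah_relation_XZ {A : Type*} [Ring A]
    (e : Fin 3 → Fin 2 → Fin 2 → A) (h : SL2Cube e) :
    XX e * ZZ e - ZZ e * XX e =
      4 * (XX e * YY e + YY e * XX e) + 4 * (XX e) ^ 2
        - 4 * ((kA e 0 + kA e 1 + kA e 2 + k4 e) * XX e)
        + 4 * ((kA e 0 - kA e 1) * (k4 e - kA e 2)) := by
  have h01 : (0 : Fin 3) ≠ 1 := by decide
  have h02 : (0 : Fin 3) ≠ 2 := by decide
  have h12 : (1 : Fin 3) ≠ 2 := by decide
  have hX : Matrix.scalar (Fin 2) (XX e) = _ := h.scalar_kA_add_kA_add_two_mul_T2 h01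
  have hY : Matrix.scalar (Fin 2) (YY e) = _ := h.scalar_kA_add_kA_add_two_mul_T2 h12
  have hracah := racah_relation_halfCasimir
    ((h.isSL2Matrix 0).commute_halfCasimir (h.entrywiseCommute h01))
    ((h.isSL2Matrix 0).commute_halfCasimir (h.entrywiseCommute h02))
    ((h.isSL2Matrix 1).commute_halfCasimir (h.entrywiseCommute h01.symm))
    ((h.isSL2Matrix 1).commute_halfCasimir (h.entrywiseCommute h12))
    ((h.isSL2Matrix_add h01).commute_halfCasimir (h.entrywiseCommute_add_left h02 h12))
  simp only [Ring.lie_def] at hracah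
  rw [← Matrix.scalar_inj (n := Fin 2)]
  simp only [ZZ, map_sub, map_add, map_mul, map_pow, map_ofNat, hX, hY, h.scalar_kA, h.scalar_k4]
  convert congrArg (8 * ·) hracah using 1 <;> noncomm_ring
end

section
/- In U(sl₂)^{⊗3} with notation as above, the element Γ := Z² − 8(XYX + YXY) + 4(k₁+k₂+k₃+k₄−4){X,Y} − 8(k₁−k₂)(k₄−k₃)Y − 8(k₃−k₂)(k₄−k₁)X equals 8(k₁−k₂+k₃−k₄)(k₁k₃−k₂k₄) − 32(k₁k₃+k₂k₄). -/
/-!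
Collect the generators of the `a`-th factor into a `2 × 2` matrix `M a` over the algebra. The
`sl₂` relations become `M a ^ 2 = M a + c a` with a scalar Casimir element `c a` such that
`kₐ = 2 c a`, and `M a * M b + M b * M a` is the scalar `T^{(a,b)}` for `a ≠ b`. Writing
`C x = x ^ 2 - x`, all ingredients of `Γ` are Casimirs of sums: `X = 2 C (M 1 + M 2)`,
`Y = 2 C (M 2 + M 3)` and `k₄ = 2 C (M 1 + M 2 + M 3)`. So the identity can be proved for three
elements of any ring whose Casimirs commute with all three elements and whose pairwise
anticommutators commute with the third one. There the commutator of `X` and `Y` is an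
antisymmetrized triple product, and its square is a Gram determinant up to lower order terms.
-/

section Casimir

variable {R : Type*} [Ring R]

/-- If `x` is the matrix `∑ E_{ij} ⊗ e_{ij}` of generators of `sl₂`, then `x ^ 2 - x` is a scalar
matrix, namely the Casimir element normalized to be half the trace of `x ^ 2`. -/
def casimir (x : R) : R := x * x - x

/-- The anticommutator `{x, y}`; for matrices of generators of two commuting copies of `sl₂` it is
the scalar `tr (x y)`. -/
def anticommutator (x y : R) : R := x * y + y * x

lemma anticommutator_comm (x y : R) : anticommutator x y = anticommutator y x :=
  add_comm _ _

lemma mul_eq_anticommutator_sub (x y : R) : y * x = anticommutator x y - x * y := by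
  rw [anticommutator, add_sub_cancel_left]

lemma casimir_add (x y : R) :
    casimir (x + y) = casimir x + casimir y + anticommutator x y := by
  simp only [casimir, anticommutator]
  noncomm_ring

lemma casimir_add_add (x y z : R) :
    casimir (x + y + z) = casimir x + casimir y + casimir z +
      (anticommutator x y + anticommutator y z + anticommutator x z) := by
  simp only [casimir, anticommutator]
  noncomm_ring

lemma mul_anticommutator_left {x y : R} (h : Commute (casimir x) y) :
    x * anticommutator x y = anticommutator x y * x + 2 • (x * y) - anticommutator x y := by
  have hxy := h.eq
  simp only [casimir, anticommutator] at *
  linear_combination (norm := noncomm_ring) hxy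

lemma mul_anticommutator_right {x y : R} (h : Commute (casimir y) x) :
    y * anticommutator x y = anticommutator x y * y - 2 • (x * y) + anticommutator x y := by
  have hyx := h.eq
  simp only [casimir, anticommutator] at *
  linear_combination (norm := noncomm_ring) hyx

lemma mul_mul_of_mul_eq {S : Type*} [Semigroup S] {x y z : S} (h : x * y = z) (w : S) :
    x * (y * w) = z * w := by
  rw [← mul_assoc, h]

/-- The value of the Casimir element `Γ` of the Racah algebra, for `kᵢ = 2 cᵢ`, `X = 2 x` and
`Y = 2 y`. The common factor `16` is removed, since the ring may have `2`-torsion. -/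
def RacahCasimirRelation (c₁ c₂ c₃ c₄ x y : R) : Prop :=
  (x * y - y * x) ^ 2 - 4 • (x * y * x + y * x * y) +
      2 • ((c₁ + c₂ + c₃ + c₄ - 2 • 1) * (x * y + y * x)) -
      4 • ((c₁ - c₂) * (c₄ - c₃) * y) - 4 • ((c₃ - c₂) * (c₄ - c₁) * x) =
    4 • ((c₁ - c₂ + c₃ - c₄) * (c₁ * c₃ - c₂ * c₄)) - 8 • (c₁ * c₃ + c₂ * c₄)

namespace RacahCasimirRelation

variable {c₁ c₂ c₃ c₄ x y : R}

lemma of_map {S : Type*} [Ring S] {f : R →+* S} (hf : Function.Injective f)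
    (h : RacahCasimirRelation (f c₁) (f c₂) (f c₃) (f c₄) (f x) (f y)) :
    RacahCasimirRelation c₁ c₂ c₃ c₄ x y :=
  hf <| by
    simpa only [RacahCasimirRelation, map_add, map_sub, map_mul, map_pow, map_nsmul, map_one]
      using h

lemma of_two_nsmul {k₁ k₂ k₃ k₄ X Y : R} (h : RacahCasimirRelation c₁ c₂ c₃ c₄ x y)
    (hk₁ : k₁ = 2 • c₁) (hk₂ : k₂ = 2 • c₂) (hk₃ : k₃ = 2 • c₃) (hk₄ : k₄ = 2 • c₄)
    (hX : X = 2 • x) (hY : Y = 2 • y) :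
    (X * Y - Y * X) ^ 2 - 8 * (X * Y * X + Y * X * Y) +
        4 * ((k₁ + k₂ + k₃ + k₄ - 4) * (X * Y + Y * X)) -
        8 * ((k₁ - k₂) * (k₄ - k₃) * Y) - 8 * ((k₃ - k₂) * (k₄ - k₁) * X) =
      8 * ((k₁ - k₂ + k₃ - k₄) * (k₁ * k₃ - k₂ * k₄)) - 32 * (k₁ * k₃ + k₂ * k₄) := by
  subst hk₁ hk₂ hk₃ hk₄ hX hY
  rw [RacahCasimirRelation] at h
  linear_combination (norm := noncomm_ring) 16 * h

end RacahCasimirRelation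

end Casimir

/-- A family of ring elements behaving like the matrices `∑ E_{ij} ⊗ e_{ij}` of mutually commuting
copies of `sl₂`: the Casimirs commute with every member, and the anticommutator of two members,
being a scalar matrix with entries in their two copies of `sl₂`, commutes with every third one. -/
structure IsSpinFamily {R ι : Type*} [Ring R] (m : ι → R) : Prop where
  commute_casimir (i j : ι) : Commute (casimir (m i)) (m j)
  commute_anticommutator {i j k : ι} (hij : i ≠ j) (hik : i ≠ k) (hjk : j ≠ k) :
    Commute (anticommutator (m i) (m j)) (m k)

namespace IsSpinFamily

variable {R ι : Type*} [Ring R] {m : ι → R} {i j k : ι}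

lemma commute_casimir_casimir (h : IsSpinFamily m) (i j : ι) :
    Commute (casimir (m i)) (casimir (m j)) :=
  ((h.commute_casimir i j).mul_right (h.commute_casimir i j)).sub_right (h.commute_casimir i j)

lemma commute_anticommutator_casimir (h : IsSpinFamily m) (i j k : ι) :
    Commute (anticommutator (m i) (m j)) (casimir (m k)) :=
  have hki := h.commute_casimir k i
  have hkj := h.commute_casimir k j
  ((hki.mul_right hkj).add_right (hkj.mul_right hki)).symm

lemma anticommutator_mul_anticommutator (h : IsSpinFamily m) (hij : i ≠ j) (hik : i ≠ k)
    (hjk : j ≠ k) :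
    anticommutator (m i) (m j) * anticommutator (m j) (m k) =
      anticommutator (m j) (m k) * anticommutator (m i) (m j) +
        2 • (m i * m j * m k - m k * m j * m i) := by
  have hk := (h.commute_anticommutator hij hik hjk).eq
  have hj := mul_anticommutator_right (h.commute_casimir j i)
  simp only [anticommutator] at *
  linear_combination (norm := noncomm_ring) hk * m j + m j * hk - hk - m k * hj - hj * m k

lemma commutator_anticommutator_rotate (h : IsSpinFamily m) (hij : i ≠ j) (hik : i ≠ k)
    (hjk : j ≠ k) :
    anticommutator (m j) (m k) * anticommutator (m k) (m i) -
        anticommutator (m k) (m i) * anticommutator (m j) (m k) =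
      anticommutator (m i) (m j) * anticommutator (m j) (m k) -
        anticommutator (m j) (m k) * anticommutator (m i) (m j) := by
  have hi := (h.commute_anticommutator hjk hij.symm hik.symm).eq
  rw [h.anticommutator_mul_anticommutator hjk hij.symm hik.symm,
    h.anticommutator_mul_anticommutator hij hik hjk, add_sub_cancel_left, add_sub_cancel_left]
  simp only [anticommutator] at hi
  linear_combination (norm := noncomm_ring) 2 * hi

lemma sq_commutator_anticommutator (h : IsSpinFamily m) (hij : i ≠ j) (hik : i ≠ k)
    (hjk : j ≠ k) {p q r : R} (hp : anticommutator (m i) (m j) = p)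
    (hq : anticommutator (m j) (m k) = q) (hr : anticommutator (m k) (m i) = r) :
    (p * q - q * p) ^ 2 =
      4 • (casimir (m i) * q ^ 2 + casimir (m j) * r ^ 2 + casimir (m k) * p ^ 2) -
        16 • (casimir (m i) * casimir (m j) * casimir (m k)) +
        4 • (p * q * p + q * p * q) - 2 • ((p + q + r) * (p * q + q * p)) +
        4 • (p * q + q * p) +
        8 • (casimir (m i) * q - casimir (m j) * r + casimir (m k) * p) := by
  subst hp hq hr
  have hji := mul_eq_anticommutator_sub (m i) (m j)
  have hkj := mul_eq_anticommutator_sub (m j) (m k)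
  have hki := anticommutator_comm (m i) (m k) ▸ mul_eq_anticommutator_sub (m i) (m k)
  have hip := mul_anticommutator_left (h.commute_casimir i j)
  have hjp := mul_anticommutator_right (h.commute_casimir j i)
  have hkp := (h.commute_anticommutator hij hik hjk).eq.symm
  have hjq := mul_anticommutator_left (h.commute_casimir j k)
  have hkq := mul_anticommutator_right (h.commute_casimir k j)
  have hiq := (h.commute_anticommutator hjk hij.symm hik.symm).eq.symm
  have hkr := mul_anticommutator_left (h.commute_casimir k i)
  have hir := mul_anticommutator_right (h.commute_casimir i k)
  have hjr := (h.commute_anticommutator hik.symm hjk.symm hij).eq.symm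
  have hqp := eq_sub_of_add_eq (h.anticommutator_mul_anticommutator hij hik hjk).symm
  have hrq := eq_sub_of_add_eq (h.anticommutator_mul_anticommutator hjk hij.symm hik.symm).symm
  have hrp := h.anticommutator_mul_anticommutator hik.symm hjk.symm hij
  -- Both sides are brought to a PBW normal form with `p, q, r` to the left of `m i, m j, m k`.
  simp only [casimir, pow_two, mul_add, add_mul, mul_sub, sub_mul, mul_assoc, smul_mul_assoc,
    mul_smul_comm, smul_add, smul_sub, smul_smul, hji, hkj, hki, hkp, hjq, hkq, hiq,
    hkr, hir, hjr, hqp, hrq, hrp, mul_mul_of_mul_eq hji, mul_mul_of_mul_eq hkj,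
    mul_mul_of_mul_eq hki, mul_mul_of_mul_eq hip, mul_mul_of_mul_eq hjp, mul_mul_of_mul_eq hkp,
    mul_mul_of_mul_eq hjq, mul_mul_of_mul_eq hkq, mul_mul_of_mul_eq hiq, mul_mul_of_mul_eq hkr,
    mul_mul_of_mul_eq hir, mul_mul_of_mul_eq hjr, mul_mul_of_mul_eq hqp, mul_mul_of_mul_eq hrq,
    mul_mul_of_mul_eq hrp]
  generalize anticommutator (m i) (m j) = p
  generalize anticommutator (m j) (m k) = q
  generalize anticommutator (m k) (m i) = r
  abel

lemma commutator_casimir_add (h : IsSpinFamily m) (i j k : ι) :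
    casimir (m i + m j) * casimir (m j + m k) - casimir (m j + m k) * casimir (m i + m j) =
      anticommutator (m i) (m j) * anticommutator (m j) (m k) -
        anticommutator (m j) (m k) * anticommutator (m i) (m j) := by
  have hp := h.commute_anticommutator_casimir i j
  have hq := h.commute_anticommutator_casimir j k
  have hc := h.commute_casimir_casimir
  simp only [casimir_add, mul_add, add_mul, (hp j).eq, (hp k).eq, (hq i).eq, (hq j).eq,
    (hc j i).eq, (hc k i).eq, (hc k j).eq]
  abel

theorem racahCasimirRelation (h : IsSpinFamily m) (hij : i ≠ j) (hik : i ≠ k) (hjk : j ≠ k) :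
    RacahCasimirRelation (casimir (m i)) (casimir (m j)) (casimir (m k))
      (casimir (m i + m j + m k)) (casimir (m i + m j)) (casimir (m j + m k)) := by
  have hgram := h.sq_commutator_anticommutator hij hik hjk rfl rfl rfl
  have hqr := h.commutator_anticommutator_rotate hij hik hjk
  have hrp := (h.commutator_anticommutator_rotate hjk hij.symm hik.symm).trans hqr
  rw [RacahCasimirRelation, h.commutator_casimir_add, hgram, casimir_add_add, casimir_add,
    casimir_add, anticommutator_comm (m i) (m k)]
  have hp := h.commute_anticommutator_casimir i j
  have hq := h.commute_anticommutator_casimir j k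
  have hr := h.commute_anticommutator_casimir k i
  have hc := h.commute_casimir_casimir
  replace hrp := sub_eq_iff_eq_add.mp hrp
  have hrq := eq_sub_of_add_eq (sub_eq_iff_eq_add'.mp hqr).symm
  simp only [pow_two, mul_add, add_mul, mul_sub, sub_mul, mul_assoc, smul_mul_assoc,
    smul_add, smul_sub, smul_smul, one_mul, hrp, hrq,
    mul_mul_of_mul_eq hrp, mul_mul_of_mul_eq hrq,
    (hc j i).eq, (hc j i).left_comm, (hc k i).eq, (hc k i).left_comm,
    (hc k j).eq, (hc k j).left_comm, (hp i).eq, (hp i).left_comm,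
    (hp j).eq, (hp j).left_comm, (hp k).eq, (hp k).left_comm,
    (hq i).eq, (hq i).left_comm, (hq j).eq, (hq j).left_comm,
    (hq k).eq, (hq k).left_comm, (hr i).eq, (hr i).left_comm,
    (hr j).eq, (hr j).left_comm, (hr k).eq, (hr k).left_comm]
  generalize anticommutator (m i) (m j) = p
  generalize anticommutator (m j) (m k) = q
  generalize anticommutator (m k) (m i) = r
  generalize casimir (m i) = a
  generalize casimir (m j) = b
  generalize casimir (m k) = c
  abel

end IsSpinFamily

section SpinMatrix

variable {A : Type*} [Ring A]

lemma commute_scalar_of_forall_commute {n : Type*} [Fintype n] [DecidableEq n] {x : A}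
    {M : Matrix n n A} (hx : ∀ i j, Commute x (M i j)) : Commute (Matrix.scalar n x) M :=
  Matrix.scalar_commute_iff.2 <| Matrix.ext hx

/-- The generators of the `a`-th factor arranged in a matrix, so that `T2 e a b` is the trace of a
product of two such matrices. -/
def spinMatrix (e : Fin 3 → Fin 2 → Fin 2 → A) (a : Fin 3) : Matrix (Fin 2) (Fin 2) A :=
  Matrix.of (e a)

/-- The Casimir element of the `a`-th factor in PBW form, normalized to be half of `kA e a`. -/
def factorCasimir (e : Fin 3 → Fin 2 → Fin 2 → A) (a : Fin 3) : A :=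
  e a 0 0 * e a 0 0 + e a 0 0 + e a 1 0 * e a 0 1

end SpinMatrix

namespace SL2Cube

variable {A : Type*} [Ring A] {e : Fin 3 → Fin 2 → Fin 2 → A} {a b : Fin 3}

lemma apply_one_one (h : SL2Cube e) (a : Fin 3) : e a 1 1 = -e a 0 0 :=
  eq_neg_of_add_eq_zero_right (h.1 a)

lemma zero_one_mul_one_zero (h : SL2Cube e) (a : Fin 3) :
    e a 0 1 * e a 1 0 = e a 1 0 * e a 0 1 + 2 • e a 0 0 := by
  have := h.2.1 a 0 1 1 0
  simp only [if_true, h.apply_one_one] at this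
  linear_combination (norm := noncomm_ring) this

lemma zero_zero_mul_zero_one (h : SL2Cube e) (a : Fin 3) :
    e a 0 0 * e a 0 1 = e a 0 1 * e a 0 0 + e a 0 1 := by
  have := h.2.1 a 0 0 0 1
  simpa [sub_eq_iff_eq_add'] using this

lemma one_zero_mul_zero_zero (h : SL2Cube e) (a : Fin 3) :
    e a 1 0 * e a 0 0 = e a 0 0 * e a 1 0 + e a 1 0 := by
  have := h.2.1 a 1 0 0 0
  simpa [sub_eq_iff_eq_add'] using this

lemma kA_eq_two_nsmul (h : SL2Cube e) (a : Fin 3) : kA e a = 2 • factorCasimir e a := by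
  simp only [kA, T2, Fin.sum_univ_two, factorCasimir, h.apply_one_one, h.zero_one_mul_one_zero]
  noncomm_ring

lemma casimir_spinMatrix (h : SL2Cube e) (a : Fin 3) :
    casimir (spinMatrix e a) = Matrix.scalar (Fin 2) (factorCasimir e a) := by
  simp only [← Matrix.ext_iff, Fin.forall_fin_two, casimir, spinMatrix, factorCasimir,
    Matrix.sub_apply, Matrix.mul_apply, Matrix.of_apply, Fin.sum_univ_two, Matrix.scalar_apply,
    Matrix.diagonal_apply, if_true, zero_ne_one, one_ne_zero, if_false, h.apply_one_one,
    h.zero_one_mul_one_zero, h.zero_zero_mul_zero_one, h.one_zero_mul_zero_zero]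
  refine ⟨⟨?_, ?_⟩, ?_, ?_⟩ <;> noncomm_ring

lemma anticommutator_spinMatrix (h : SL2Cube e) (hab : a ≠ b) :
    anticommutator (spinMatrix e a) (spinMatrix e b) = Matrix.scalar (Fin 2) (T2 e a b) := by
  have hc := fun i j k l => (h.2.2 a b hab i j k l).eq
  simp only [← Matrix.ext_iff, Fin.forall_fin_two, anticommutator, spinMatrix, T2,
    Matrix.add_apply, Matrix.mul_apply, Matrix.of_apply, Fin.sum_univ_two, Matrix.scalar_apply,
    Matrix.diagonal_apply, if_true, zero_ne_one, one_ne_zero, if_false, h.apply_one_one, ← hc]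
  refine ⟨⟨?_, ?_⟩, ?_, ?_⟩ <;> noncomm_ring

lemma isSpinFamily (h : SL2Cube e) : IsSpinFamily (spinMatrix e) where
  commute_casimir a b := by
    obtain rfl | hab := eq_or_ne a b
    · exact ((Commute.refl _).mul_left (Commute.refl _)).sub_left (Commute.refl _)
    rw [h.casimir_spinMatrix]
    have hc := h.2.2 a b hab
    exact commute_scalar_of_forall_commute fun i j => (((hc _ _ i j).mul_left (hc _ _ i j)).add_left
      (hc _ _ i j)).add_left ((hc _ _ i j).mul_left (hc _ _ i j))
  commute_anticommutator {a b c} hab hac hbc := by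
    rw [h.anticommutator_spinMatrix hab]
    refine commute_scalar_of_forall_commute fun i j => ?_
    exact Commute.sum_left _ _ _ fun k _ => Commute.sum_left _ _ _ fun l _ =>
      (h.2.2 a c hac l k i j).mul_left (h.2.2 b c hbc k l i j)

theorem racahCasimirRelation (h : SL2Cube e) :
    RacahCasimirRelation (factorCasimir e 0) (factorCasimir e 1) (factorCasimir e 2)
      (factorCasimir e 0 + factorCasimir e 1 + factorCasimir e 2 +
        (T2 e 0 1 + T2 e 1 2 + T2 e 0 2))
      (factorCasimir e 0 + factorCasimir e 1 + T2 e 0 1)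
      (factorCasimir e 1 + factorCasimir e 2 + T2 e 1 2) := by
  have h01 : (0 : Fin 3) ≠ 1 := by decide
  have h02 : (0 : Fin 3) ≠ 2 := by decide
  have h12 : (1 : Fin 3) ≠ 2 := by decide
  refine .of_map (f := Matrix.scalar (Fin 2)) (fun _ _ => Matrix.scalar_inj.1) ?_
  have hs := h.isSpinFamily.racahCasimirRelation h01 h02 h12
  rw [casimir_add_add, casimir_add, casimir_add, h.anticommutator_spinMatrix h01,
    h.anticommutator_spinMatrix h02, h.anticommutator_spinMatrix h12] at hs
  simpa only [map_add, h.casimir_spinMatrix] using hs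

end SL2Cube

/-- The value of the Racah "Casimir" `Γ` in `U(sl₂)^{⊗3}`:
`Γ = Z² − 8(XYX + YXY) + 4(k₁+k₂+k₃+k₄−4){X,Y} − 8(k₁−k₂)(k₄−k₃)Y − 8(k₃−k₂)(k₄−k₁)X`
equals `8(k₁−k₂+k₃−k₄)(k₁k₃−k₂k₄) − 32(k₁k₃+k₂k₄)`. -/
theorem racah_gamma_value {A : Type*} [Ring A]
    (e : Fin 3 → Fin 2 → Fin 2 → A) (h : SL2Cube e) :
    (ZZ e) ^ 2 - 8 * (XX e * YY e * XX e + YY e * XX e * YY e)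
      + 4 * ((kA e 0 + kA e 1 + kA e 2 + k4 e - 4) * (XX e * YY e + YY e * XX e))
      - 8 * ((kA e 0 - kA e 1) * (k4 e - kA e 2) * YY e)
      - 8 * ((kA e 2 - kA e 1) * (k4 e - kA e 0) * XX e) =
    8 * ((kA e 0 - kA e 1 + kA e 2 - k4 e) * (kA e 0 * kA e 2 - kA e 1 * k4 e))
      - 32 * (kA e 0 * kA e 2 + kA e 1 * k4 e) := by
  have hk := h.kA_eq_two_nsmul
  refine h.racahCasimirRelation.of_two_nsmul (hk 0) (hk 1) (hk 2) ?_ ?_ ?_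
  · rw [k4, hk, hk, hk]
    noncomm_ring
  · rw [XX, hk, hk]
    noncomm_ring
  · rw [YY, hk, hk]
    noncomm_ring
end
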